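/- Let Z ∈ L^1 and set g(p) = ES_p(Z) for every p ∈ [0,1]. Then ES^g is never finite on L^1: there exists X ∈ L^1 with ES^g(X) = ∞. Specifically, if Z is bounded from above, any X ∈ L^1 unbounded from above satisfies ES^g(X) = ∞; if Z is unbounded from above, then X = 2Z satisfies ES^g(X) = ∞. -/

import Mathlib

open MeasureTheory Set Filter

variable {Ω : Type*} [MeasurableSpace Ω]

/-- An atomless probability space: every set of positive measure has a subset of
strictly smaller positive measure. -/
def Atomless (μ : Measure Ω) : Prop :=
  ∀ A : Set Ω, MeasurableSet A → 0 < μ A →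
    ∃ B : Set Ω, MeasurableSet B ∧ B ⊆ A ∧ 0 < μ B ∧ μ B < μ A

/-- Value at Risk at level `p`: the left `p`-quantile for `p ∈ (0,1]`, the essential
infimum for `p = 0`.  Values are extended reals. -/
noncomputable def VaR (μ : Measure Ω) (X : Ω → ℝ) (p : ℝ) : EReal :=
  if p = 0 then essInf (fun ω => (X ω : EReal)) μ
  else sInf ((fun x : ℝ => (x : EReal)) '' {x : ℝ | ENNReal.ofReal p ≤ μ {ω | X ω ≤ x}})

/-- Real-valued version of the left `p`-quantile, used as the integrand of ES. -/
noncomputable def VaRr (μ : Measure Ω) (X : Ω → ℝ) (p : ℝ) : ℝ :=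
  sInf {x : ℝ | ENNReal.ofReal p ≤ μ {ω | X ω ≤ x}}

/-- Expected Shortfall at level `p`: `(1/(1-p)) ∫_p^1 VaR_q(X) dq` for `p ∈ [0,1)`,
the essential supremum for `p = 1`. -/
noncomputable def ES (μ : Measure Ω) (X : Ω → ℝ) (p : ℝ) : EReal :=
  if p = 1 then essSup (fun ω => (X ω : EReal)) μ
  else (((1 - p)⁻¹ * ∫ q in Set.Ioo p 1, VaRr μ X q : ℝ) : EReal)

/-- The `g`-adjusted Expected Shortfall, `sup_{p ∈ [0,1]} (ES_p(X) - g(p))`.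
Note that in `EReal` one has `⊤ - ⊤ = ⊥`, matching the convention `∞ - ∞ = -∞`. -/
noncomputable def adjES (μ : Measure Ω) (g : ℝ → EReal) (X : Ω → ℝ) : EReal :=
  ⨆ p ∈ Set.Icc (0:ℝ) 1, (ES μ X p - g p)

/-- The class `𝒢` of risk profiles: increasing functions `[0,1] → (-∞,∞]` that are
not identically `∞`. -/
def IsRiskProfile (g : ℝ → EReal) : Prop :=
  MonotoneOn g (Set.Icc (0:ℝ) 1) ∧ (∀ p ∈ Set.Icc (0:ℝ) 1, g p ≠ ⊥) ∧
    ∃ p ∈ Set.Icc (0:ℝ) 1, g p ≠ ⊤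

/-- Second-order stochastic dominance: `SSD μ X Y` means `X ≥_SSD Y`, i.e. every
risk-averse agent prefers `X` to `Y` (positive values are losses). -/
def SSD (μ : Measure Ω) (X Y : Ω → ℝ) : Prop :=
  ∀ u : ℝ → ℝ, Monotone u → ConcaveOn ℝ Set.univ u →
    ∫ ω, u (-(Y ω)) ∂μ ≤ ∫ ω, u (-(X ω)) ∂μ

/-- The inf-convolution of the functionals `ρ_1, …, ρ_n`. -/
noncomputable def infConv (μ : Measure Ω) {n : ℕ} (ρ : Fin n → ((Ω → ℝ) → EReal))
    (X : Ω → ℝ) : EReal :=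
  ⨅ (Y : Fin n → Ω → ℝ) (_ : (∀ i, Integrable (Y i) μ) ∧ ∀ ω, (∑ i, Y i ω) = X ω),
    ∑ i, ρ i (Y i)

/-- The class `𝒢_VaR`: risk profiles finite on `[0,1)`, left-continuous on `[0,1]`
and right-continuous at `0`. -/
def GVaRProfile (g : ℝ → EReal) : Prop :=
  IsRiskProfile g ∧ (∀ p ∈ Set.Ico (0:ℝ) 1, g p ≠ ⊤) ∧
    (∀ p ∈ Set.Ioc (0:ℝ) 1, Filter.Tendsto g (nhdsWithin p (Set.Ico 0 p)) (nhds (g p))) ∧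
    Filter.Tendsto g (nhdsWithin 0 (Set.Ioc 0 1)) (nhds (g 0))

/-- The class `𝒢_ES`: profiles in `𝒢_VaR` such that `h_g(p) = (1-p)g(p)` is concave
on `(0,1)` and left-continuous at `1` (with `h_g(1) = 0` by the convention `0·∞ = 0`). -/
def GESProfile (g : ℝ → EReal) : Prop :=
  GVaRProfile g ∧ ConcaveOn ℝ (Set.Ioo (0:ℝ) 1) (fun p => (1 - p) * (g p).toReal) ∧
    Filter.Tendsto (fun p => (1 - p) * (g p).toReal) (nhdsWithin 1 (Set.Ico (0:ℝ) 1)) (nhds 0)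

/-!
If `Z` is bounded above, the level `p = 1` alone is decisive: there `ES^g(X)` is at least
`ess sup X - ess sup Z`, and an integrable `X` with `ess sup X = ∞` exists because an atomless
space has events of arbitrarily small positive probability.

If `Z` is unbounded above, positive homogeneity gives `ES_p(2Z) - ES_p(Z) = ES_p(Z)` for `p < 1`,
and `ES_p(Z)` is at least `VaR_p(Z)`, which exceeds any given real number for `p` close to `1`.
The integral defining `ES_p(Z)` is finite since `VaR_U(Z)`, with `U` uniform on `(0,1)`, has the
law of `Z`.
-/

section Atomless

variable {μ : Measure Ω} {A : Set Ω}

theorem Atomless.exists_subset_measure_le_half (hμ : Atomless μ) (hA : MeasurableSet A)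
    (hA₀ : 0 < μ A) : ∃ B ⊆ A, MeasurableSet B ∧ 0 < μ B ∧ μ B ≤ μ A / 2 := by
  obtain ⟨B, hB, hBA, hB₀, hlt⟩ := hμ A hA hA₀
  have hsum : μ B + μ (A \ B) = μ A := by
    rw [← measure_inter_add_sdiff A hB, inter_eq_right.2 hBA]
  have hdiff₀ : 0 < μ (A \ B) := by
    refine pos_iff_ne_zero.2 fun h => hlt.ne ?_
    rw [← hsum, h, add_zero]
  have le_half {a b : ENNReal} (hab : a ≤ b) : a ≤ (a + b) / 2 :=
    calc a = (a + a) / 2 := by rw [ENNReal.add_div, ENNReal.add_halves]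
      _ ≤ (a + b) / 2 := by gcongr
  rcases le_total (μ B) (μ (A \ B)) with h | h
  · exact ⟨B, hBA, hB, hB₀, hsum ▸ le_half h⟩
  · exact ⟨A \ B, sdiff_subset, hA.diff hB, hdiff₀, hsum ▸ add_comm (μ B) _ ▸ le_half h⟩

theorem Atomless.exists_subset_measure_lt (hμ : Atomless μ) (hA : MeasurableSet A)
    (hA₀ : 0 < μ A) {ε : ENNReal} (hε : ε ≠ 0) :
    ∃ B ⊆ A, MeasurableSet B ∧ 0 < μ B ∧ μ B < ε := by
  obtain ⟨C, hC, hCA, hC₀, hC_lt⟩ := hμ A hA hA₀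
  have halving (n : ℕ) : ∃ B ⊆ C, MeasurableSet B ∧ 0 < μ B ∧ μ B ≤ 2⁻¹ ^ n * μ C := by
    induction n with
    | zero => exact ⟨C, Subset.rfl, hC, hC₀, by simp⟩
    | succ n ih =>
      obtain ⟨B, hBC, hB, hB₀, hBn⟩ := ih
      obtain ⟨B', hB'B, hB', hB'₀, hhalf⟩ := hμ.exists_subset_measure_le_half hB hB₀
      refine ⟨B', hB'B.trans hBC, hB', hB'₀, hhalf.trans ?_⟩
      rw [pow_succ', mul_assoc, ENNReal.div_eq_inv_mul]
      gcongr
  obtain ⟨n, hn⟩ := ENNReal.exists_inv_two_pow_lt (ENNReal.div_ne_zero.2 ⟨hε, hC_lt.ne_top⟩)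
  obtain ⟨B, hBC, hB, hB₀, hBn⟩ := halving n
  exact ⟨B, hBC.trans hCA, hB, hB₀, hBn.trans_lt (ENNReal.mul_lt_of_lt_div hn)⟩

theorem exists_integrable_not_ae_le_of_exists_measure_lt
    (hμ : ∀ ε : ENNReal, ε ≠ 0 → ∃ A, MeasurableSet A ∧ 0 < μ A ∧ μ A < ε) :
    ∃ X : Ω → ℝ, Integrable X μ ∧ ¬ ∃ c : ℝ, ∀ᵐ ω ∂μ, X ω ≤ c := by
  obtain ⟨δ, hδ₀, hδ⟩ := ENNReal.exists_pos_sum_of_countable' one_ne_zero ℕ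
  choose A hA hA₀ hAδ using fun n : ℕ =>
    hμ (δ n / n) (ENNReal.div_ne_zero.2 ⟨(hδ₀ n).ne', ENNReal.natCast_ne_top n⟩)
  let F : Ω → ENNReal := fun ω => ∑' n, (A n).indicator (fun _ => (n : ENNReal)) ω
  have hF_meas : Measurable F :=
    Measurable.tsum fun n => measurable_const.indicator (hA n)
  have hF_int : ∫⁻ ω, F ω ∂μ ≠ ⊤ := by
    refine ne_top_of_lt (b := 1) (lt_of_le_of_lt ?_ hδ)
    calc ∫⁻ ω, F ω ∂μ = ∑' n : ℕ, n * μ (A n) := by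
          rw [lintegral_tsum fun n => (measurable_const.indicator (hA n)).aemeasurable]
          simp only [lintegral_indicator_const (hA _)]
      _ ≤ ∑' n, δ n := ENNReal.tsum_le_tsum fun n =>
          (mul_le_mul_right (hAδ n).le _).trans ENNReal.mul_div_le
  have le_toReal {n : ℕ} {ω : Ω} (hω : ω ∈ A n) (hF : F ω < ⊤) : (n : ℝ) ≤ (F ω).toReal := by
    have : (n : ENNReal) ≤ F ω := by
      simpa only [indicator_of_mem hω] using
        ENNReal.le_tsum (f := fun k => (A k).indicator (fun _ => (k : ENNReal)) ω) n
    simpa only [ENNReal.toReal_natCast] using ENNReal.toReal_mono hF.ne this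
  refine ⟨fun ω => (F ω).toReal,
    integrable_toReal_of_lintegral_ne_top hF_meas.aemeasurable hF_int, ?_⟩
  rintro ⟨c, hc⟩
  obtain ⟨n, hn⟩ := exists_nat_gt c
  refine (hA₀ n).ne' (measure_eq_zero_iff_ae_notMem.2 ?_)
  filter_upwards [hc, ae_lt_top hF_meas hF_int] with ω hωc hω_lt hω
  exact (hn.trans_le (le_toReal hω hω_lt)).not_ge hωc

theorem Atomless.exists_integrable_not_ae_le [NeZero μ] (hμ : Atomless μ) :
    ∃ X : Ω → ℝ, Integrable X μ ∧ ¬ ∃ c : ℝ, ∀ᵐ ω ∂μ, X ω ≤ c := by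
  refine exists_integrable_not_ae_le_of_exists_measure_lt fun ε hε => ?_
  obtain ⟨A, -, hA⟩ :=
    hμ.exists_subset_measure_lt .univ (Measure.measure_univ_pos.2 (NeZero.ne μ)) hε
  exact ⟨A, hA⟩

end Atomless

section Quantile

theorem csInf_setOf_le_stieltjes_le_iff {R : Type*} [ConditionallyCompleteLinearOrder R]
    [TopologicalSpace R] [OrderTopology R] [DenselyOrdered R] [NoMaxOrder R]
    (F : StieltjesFunction R) {q : ℝ} (hne : {x | q ≤ F x}.Nonempty)
    (hbdd : BddBelow {x | q ≤ F x}) {x : R} : sInf {x | q ≤ F x} ≤ x ↔ q ≤ F x := by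
  refine ⟨fun h => le_trans ?_ (F.mono h), fun h => csInf_le hbdd h⟩
  rw [← F.iInf_Ioi_eq]
  refine le_ciInf fun r => ?_
  obtain ⟨y, hy, hyr⟩ := exists_lt_of_csInf_lt hne r.2
  exact le_trans hy (F.mono hyr.le)

variable {μ : Measure Ω} [IsProbabilityMeasure μ] {X : Ω → ℝ} {p x : ℝ}

theorem VaRr_le_iff (hX : AEMeasurable X μ) (hp : p ∈ Ioo 0 1) :
    VaRr μ X p ≤ x ↔ p ≤ μ.real {ω | X ω ≤ x} := by
  have := Measure.isProbabilityMeasure_map hX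
  set F := ProbabilityTheory.cdf (μ.map X)
  have hF (y : ℝ) : μ.real {ω | X ω ≤ y} = F y := by
    rw [ProbabilityTheory.cdf_eq_real, map_measureReal_apply_of_aemeasurable hX measurableSet_Iic]
    rfl
  have hVaR : VaRr μ X p = sInf {y | p ≤ F y} := by
    simp only [VaRr, ENNReal.ofReal_le_iff_le_toReal (measure_ne_top μ _), ← measureReal_def, hF]
  have hne : {y | p ≤ F y}.Nonempty :=
    ((ProbabilityTheory.tendsto_cdf_atTop _).eventually_const_le hp.2).exists
  have hbdd : BddBelow {y | p ≤ F y} := by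
    obtain ⟨y, hy⟩ := ((ProbabilityTheory.tendsto_cdf_atBot _).eventually_lt_const hp.1).exists
    exact ⟨y, fun z hz => (F.mono.reflect_lt (hy.trans_le hz)).le⟩
  rw [hVaR, csInf_setOf_le_stieltjes_le_iff F hne hbdd, hF]

theorem monotoneOn_VaRr (hX : AEMeasurable X μ) : MonotoneOn (VaRr μ X) (Ioo 0 1) :=
  fun _ hp _ hq hpq => (VaRr_le_iff hX hp).2 (hpq.trans ((VaRr_le_iff hX hq).1 le_rfl))

theorem identDistrib_VaRr (hX : AEMeasurable X μ) :
    ProbabilityTheory.IdentDistrib (VaRr μ X) X (volume.restrict (Ioo 0 1)) μ := by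
  have hVaR : AEMeasurable (VaRr μ X) (volume.restrict (Ioo 0 1)) :=
    aemeasurable_restrict_of_monotoneOn measurableSet_Ioo (monotoneOn_VaRr hX)
  refine ⟨hVaR, hX, Measure.ext_of_Iic _ _ fun x => ?_⟩
  rw [Measure.map_apply_of_aemeasurable hX measurableSet_Iic,
    Measure.map_apply_of_aemeasurable hVaR measurableSet_Iic]
  have hlevel : VaRr μ X ⁻¹' Iic x =ᵐ[volume.restrict (Ioo 0 1)] Iic (μ.real (X ⁻¹' Iic x)) :=
    ae_restrict_of_forall_mem measurableSet_Ioo fun p hp => propext (VaRr_le_iff hX hp)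
  calc volume.restrict (Ioo 0 1) (VaRr μ X ⁻¹' Iic x)
      = volume.restrict (Ioc 0 1) (Iic (μ.real (X ⁻¹' Iic x))) := by
        rw [measure_congr hlevel, restrict_Ioo_eq_restrict_Ioc]
    _ = volume (Ioc 0 (μ.real (X ⁻¹' Iic x))) := by
        rw [Measure.restrict_apply measurableSet_Iic, inter_comm, Ioc_inter_Iic,
          min_eq_right measureReal_le_one]
    _ = μ (X ⁻¹' Iic x) := by rw [Real.volume_Ioc, sub_zero, ofReal_measureReal]

theorem integrableOn_VaRr (hX : Integrable X μ) : IntegrableOn (VaRr μ X) (Ioo 0 1) :=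
  (identDistrib_VaRr hX.aemeasurable).integrable_iff.2 hX

theorem exists_lt_VaRr (hX : AEMeasurable X μ) (hX_unbdd : ¬ ∃ c : ℝ, ∀ᵐ ω ∂μ, X ω ≤ c)
    (x : ℝ) : ∃ p ∈ Ioo 0 1, x < VaRr μ X p := by
  have hlt : μ.real {ω | X ω ≤ x} < 1 := by
    refine measureReal_le_one.lt_of_ne fun h => hX_unbdd ⟨x, ?_⟩
    have hmeas : NullMeasurableSet {ω | X ω ≤ x} μ := hX.nullMeasurable measurableSet_Iic
    exact (mem_ae_iff_prob_eq_one₀ hmeas).2 ((ENNReal.toReal_eq_one_iff _).1 h)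
  obtain ⟨p, hxp, hp₁⟩ := exists_between hlt
  have hp : p ∈ Ioo 0 1 := ⟨measureReal_nonneg.trans_lt hxp, hp₁⟩
  exact ⟨p, hp, not_le.1 fun h => hxp.not_ge ((VaRr_le_iff hX hp).1 h)⟩

end Quantile

theorem VaRr_const_mul (μ : Measure Ω) (X : Ω → ℝ) (p : ℝ) {c : ℝ} (hc : 0 < c) :
    VaRr μ (fun ω => c * X ω) p = c * VaRr μ X p := by
  simp only [VaRr]
  rw [← smul_eq_mul, ← Real.sInf_smul_of_nonneg hc.le]
  congr 1
  ext x
  simp only [mem_smul_set_iff_inv_smul_mem₀ hc.ne', mem_ofPred_eq, smul_eq_mul,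
    le_inv_mul_iff₀ hc]

section ExpectedShortfall

variable {μ : Measure Ω} {X : Ω → ℝ} {p : ℝ}

theorem essSup_coe_eq_top_iff :
    essSup (fun ω => (X ω : EReal)) μ = ⊤ ↔ ¬ ∃ c : ℝ, ∀ᵐ ω ∂μ, X ω ≤ c := by
  refine ⟨?_, fun h => ?_⟩
  · rintro h ⟨c, hc⟩
    have hle : essSup (fun ω => (X ω : EReal)) μ ≤ c :=
      essSup_le_of_ae_le _ (hc.mono fun ω => EReal.coe_le_coe)
    exact EReal.coe_ne_top c (top_le_iff.1 (h ▸ hle))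
  · refine (EReal.eq_top_iff_forall_lt _).2 fun c => not_le.1 fun hle => h ⟨c, ?_⟩
    filter_upwards [ae_le_essSup (μ := μ) (f := fun ω => (X ω : EReal))] with ω hω
    exact EReal.coe_le_coe_iff.1 (hω.trans hle)

theorem ES_one_eq_top_iff : ES μ X 1 = ⊤ ↔ ¬ ∃ c : ℝ, ∀ᵐ ω ∂μ, X ω ≤ c := by
  rw [ES, if_pos rfl, essSup_coe_eq_top_iff]

theorem ES_of_ne_one (hp : p ≠ 1) :
    ES μ X p = ((1 - p)⁻¹ * ∫ q in Ioo p 1, VaRr μ X q : ℝ) := if_neg hp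

theorem ES_const_mul (hp : p ≠ 1) {c : ℝ} (hc : 0 < c) :
    ES μ (fun ω => c * X ω) p = c * ES μ X p := by
  simp only [ES_of_ne_one hp, VaRr_const_mul μ X _ hc]
  rw [integral_const_mul, mul_left_comm, EReal.coe_mul]

theorem VaRr_le_ES [IsProbabilityMeasure μ] (hX : Integrable X μ) (hp : p ∈ Ioo 0 1) :
    (VaRr μ X p : EReal) ≤ ES μ X p := by
  have hint : IntegrableOn (VaRr μ X) (Ioo p 1) :=
    (integrableOn_VaRr hX).mono_set (Ioo_subset_Ioo_left hp.1.le)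
  have hle : ∀ q ∈ Ioo p 1, VaRr μ X p ≤ VaRr μ X q := fun q hq =>
    monotoneOn_VaRr hX.aemeasurable hp ⟨hp.1.trans hq.1, hq.2⟩ hq.1.le
  have h := setIntegral_ge_of_const_le_real measurableSet_Ioo measure_Ioo_lt_top.ne hle hint
  rw [Real.volume_real_Ioo_of_le hp.2.le] at h
  rw [ES_of_ne_one hp.2.ne, EReal.coe_le_coe_iff]
  exact (le_inv_mul_iff₀' (sub_pos.2 hp.2)).2 h

end ExpectedShortfall

section AdjustedExpectedShortfall

variable {μ : Measure Ω} {g : ℝ → EReal} {X : Ω → ℝ}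

theorem ES_sub_le_adjES {p : ℝ} (hp : p ∈ Icc 0 1) : ES μ X p - g p ≤ adjES μ g X :=
  le_iSup₂ (f := fun p (_ : p ∈ Icc 0 1) => ES μ X p - g p) p hp

theorem adjES_eq_top_of_not_ae_le (hg : g 1 ≠ ⊤) (hX : ¬ ∃ c : ℝ, ∀ᵐ ω ∂μ, X ω ≤ c) :
    adjES μ g X = ⊤ := by
  have h := ES_sub_le_adjES (μ := μ) (g := g) (X := X) (right_mem_Icc.2 zero_le_one)
  rwa [ES_one_eq_top_iff.2 hX, EReal.top_sub hg, top_le_iff] at h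

theorem adjES_ES_const_mul_eq_top [IsProbabilityMeasure μ] {a : ℝ} (ha : 1 < a)
    (hX : Integrable X μ) (hX_unbdd : ¬ ∃ c : ℝ, ∀ᵐ ω ∂μ, X ω ≤ c) :
    adjES μ (ES μ X) (fun ω => a * X ω) = ⊤ := by
  refine (EReal.eq_top_iff_forall_lt _).2 fun y => ?_
  obtain ⟨p, hp, hyp⟩ := exists_lt_VaRr hX.aemeasurable hX_unbdd (y / (a - 1))
  obtain ⟨e, he⟩ : ∃ e : ℝ, ES μ X p = e := ⟨_, ES_of_ne_one hp.2.ne⟩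
  have hye : y < (a - 1) * e := by
    refine (div_lt_iff₀' (sub_pos.2 ha)).1 (hyp.trans_le ?_)
    exact EReal.coe_le_coe_iff.1 (he ▸ VaRr_le_ES hX hp)
  calc (y : EReal) < ((a - 1) * e : ℝ) := EReal.coe_lt_coe hye
    _ = ES μ (fun ω => a * X ω) p - ES μ X p := by
      rw [ES_const_mul hp.2.ne (zero_lt_one.trans ha), he, sub_one_mul, EReal.coe_sub,
        EReal.coe_mul]
    _ ≤ adjES μ (ES μ X) (fun ω => a * X ω) := ES_sub_le_adjES (Ioo_subset_Icc_self hp)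

end AdjustedExpectedShortfall

/-- For `Z ∈ L¹` and the risk profile `g(p) = ES_p(Z)`, the
adjusted Expected Shortfall `ES^g` is never finite on all of `L¹`: there is
`X ∈ L¹` with `ES^g(X) = ∞`.  Specifically, if `Z` is bounded from above then every
`X ∈ L¹` unbounded from above has `ES^g(X) = ∞`; if `Z` is unbounded from above then
`X = 2Z` has `ES^g(X) = ∞`. -/
theorem stmt18 (μ : Measure Ω) [IsProbabilityMeasure μ] (hatomless : Atomless μ)
    (Z : Ω → ℝ) (hZ : Integrable Z μ) :
    (∃ X : Ω → ℝ, Integrable X μ ∧ adjES μ (fun p => ES μ Z p) X = ⊤) ∧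
    ((∃ c : ℝ, ∀ᵐ ω ∂μ, Z ω ≤ c) → ∀ X : Ω → ℝ, Integrable X μ →
        (¬ ∃ c : ℝ, ∀ᵐ ω ∂μ, X ω ≤ c) → adjES μ (fun p => ES μ Z p) X = ⊤) ∧
    ((¬ ∃ c : ℝ, ∀ᵐ ω ∂μ, Z ω ≤ c) →
        adjES μ (fun p => ES μ Z p) (fun ω => 2 * Z ω) = ⊤) := by
  have bdd (h : ∃ c : ℝ, ∀ᵐ ω ∂μ, Z ω ≤ c) (X : Ω → ℝ)
      (hX : ¬ ∃ c : ℝ, ∀ᵐ ω ∂μ, X ω ≤ c) : adjES μ (fun p => ES μ Z p) X = ⊤ :=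
    adjES_eq_top_of_not_ae_le (mt ES_one_eq_top_iff.1 (not_not_intro h)) hX
  have unbdd (h : ¬ ∃ c : ℝ, ∀ᵐ ω ∂μ, Z ω ≤ c) :
      adjES μ (fun p => ES μ Z p) (fun ω => 2 * Z ω) = ⊤ :=
    adjES_ES_const_mul_eq_top one_lt_two hZ h
  refine ⟨?_, fun h X _ => bdd h X, unbdd⟩
  by_cases h : ∃ c : ℝ, ∀ᵐ ω ∂μ, Z ω ≤ c
  · obtain ⟨X, hX, hX_unbdd⟩ := hatomless.exists_integrable_not_ae_le
    exact ⟨X, hX, bdd h X hX_unbdd⟩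
  · exact ⟨fun ω => 2 * Z ω, hZ.const_mul 2, unbdd h⟩
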